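/- Let G be a finite group possessing a Sylow tower and let χ be an irreducible complex character of G. Then the number of elements x ∈ G such that χ(x) = 0 or χ(x) is a root of unity is at least |G|/2. -/

import Mathlib

open CategoryTheory

/-- A finite group `G` has a Sylow tower if there are distinct primes `p 0, …, p (k-1)` and a
chain `⊥ = N 0 ≤ N 1 ≤ … ≤ N k = ⊤` of normal subgroups of `G` such that for each `i`
the index `|N (i+1) : N i|` equals the `p i`-part of `|G|`. -/
def HasSylowTower (G : Type*) [Group G] [Fintype G] : Prop :=
  ∃ (k : ℕ) (p : Fin k → ℕ) (N : Fin (k + 1) → Subgroup G),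
    (∀ i, (p i).Prime) ∧ Function.Injective p ∧
    Monotone N ∧ N 0 = ⊥ ∧ N (Fin.last k) = ⊤ ∧
    (∀ i, (N i).Normal) ∧
    ∀ i : Fin k,
      (N i.castSucc).relIndex (N i.succ) = p i ^ (Fintype.card G).factorization (p i)

/-!
The function `h = |χ|²` is the character of `End V`. Suppose that `h` has average `1` over a coset
`yN` of a normal subgroup `N`. Its Fourier coefficients
`c ψ = 𝔼 m : N, (ψ m)⁻¹ * h (y * m)` at the linear characters `ψ` of `N` are algebraic integers:
`c ψ` is the trace of `y` composed with the projection of `End V` onto its `ψ`-isotypic part if `y`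
fixes `ψ`, and `c ψ = 0` otherwise. All conjugates of `c ψ` have absolute value at most `1`, so by
Kronecker's theorem `c ψ` is zero or a root of unity. In the latter case equality holds in the
triangle inequality, so that `c ψ * ψ m = 1` wherever `h (y * m) ≠ 0`. By Fourier inversion the
average of `h` over each coset of `⁅N, N⁆` in `yN` is therefore a natural number `k`.

Let `p` be the proportion of elements of such a smaller coset at which `χ` is zero or a root of
unity. If `k = 0`, then `χ` vanishes on the coset and `p = 1`; if `k = 1`, then `p ≥ 1 / 2` by
induction along the derived series. So `p ≥ 1 - k / 2` in all cases, and since the numbers `k`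
average to `1`, the proportion on `yN` is at least `1 / 2`. Irreducibility of `χ` says that `h`
averages to `1` over `G`.
-/

section Kronecker

theorem nonempty_algHom_of_isTranscendenceBasis {K L M ι κ : Type*} [Field K] [Field L] [Field M]
    [Algebra K L] [Algebra K M] [IsAlgClosed M] {x : ι → L} {y : κ → M}
    (hx : IsTranscendenceBasis K x) (hy : AlgebraicIndependent K y) (e : ι ↪ κ) :
    Nonempty (L →ₐ[K] M) := by
  let A := Algebra.adjoin K (Set.range x)
  let f : A →ₐ[K] M := (MvPolynomial.aeval (y ∘ e)).comp hx.1.aevalEquiv.symm.toAlgHom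
  have hye : Function.Injective (MvPolynomial.aeval (R := K) (y ∘ e)) := hy.comp e e.injective
  have hf : Function.Injective f := hye.comp hx.1.aevalEquiv.symm.injective
  let : Algebra A M := f.toRingHom.toAlgebra
  have : IsScalarTower K A M := .of_algebraMap_eq fun a ↦ (f.commutes a).symm
  have : FaithfulSMul A M := (faithfulSMul_iff_algebraMap_injective _ _).2 hf
  have : Algebra.IsAlgebraic A L := hx.isAlgebraic
  exact ⟨(IsAlgClosed.lift : L →ₐ[A] M).restrictScalars K⟩

open Cardinal in
theorem exists_ringHom_comp_algebraMap_eq.{u, v, w} {K : Type u} {L : Type v} {M : Type w}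
    [Field K] [Countable K] [Field L] [IsAlgClosed L] [Algebra K L] [Field M] [IsAlgClosed M]
    (hL : ℵ₀ < #L) (hLM : lift.{w} #L ≤ lift.{v} #M) (φ : K →+* M) :
    ∃ σ : L →+* M, σ.comp (algebraMap K L) = φ := by
  let : Algebra K M := φ.toAlgebra
  obtain ⟨s, hs⟩ := exists_isTranscendenceBasis K L
  obtain ⟨t, ht⟩ := exists_isTranscendenceBasis K M
  have hM : ℵ₀ < #M := aleph0_lt_lift.1 ((aleph0_lt_lift.2 hL).trans_le hLM)
  have hs_card : #L = #s := lift_injective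
    (IsAlgClosed.cardinal_eq_cardinal_transcendence_basis_of_aleph0_lt _ hs mk_le_aleph0 hL)
  have ht_card : #M = #t := lift_injective
    (IsAlgClosed.cardinal_eq_cardinal_transcendence_basis_of_aleph0_lt _ ht mk_le_aleph0 hM)
  rw [hs_card, ht_card] at hLM
  obtain ⟨e⟩ := lift_mk_le'.1 hLM
  obtain ⟨σ⟩ := nonempty_algHom_of_isTranscendenceBasis hs ht.1 e
  exact ⟨σ, σ.comp_algebraMap⟩

open IntermediateField in
theorem exists_pow_eq_one_of_forall_norm_map_le_one {z : ℂ} (hz : IsIntegral ℤ z) (hz₀ : z ≠ 0)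
    (h : ∀ σ : ℂ →+* ℂ, ‖σ z‖ ≤ 1) : ∃ m : ℕ, 0 < m ∧ z ^ m = 1 := by
  have : FiniteDimensional ℚ ℚ⟮z⟯ := adjoin.finiteDimensional hz.tower_top
  have : NumberField ℚ⟮z⟯ := ⟨⟩
  have : Countable ℚ⟮z⟯ := Cardinal.mk_le_aleph0_iff.1 <|
    (Algebra.IsAlgebraic.cardinalMk_le_max ℚ _).trans (by simp)
  obtain ⟨m, hm, hzm⟩ := NumberField.Embeddings.pow_eq_one_of_norm_le_one
    (x := AdjoinSimple.gen ℚ z) ℚ⟮z⟯ ℂ (by simpa [← Subtype.coe_ne_coe] using hz₀)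
    (coe_isIntegral_iff.1 hz) fun φ ↦ by
      obtain ⟨σ, rfl⟩ := exists_ringHom_comp_algebraMap_eq
        (Cardinal.mk_complex ▸ Cardinal.aleph0_lt_continuum) le_rfl φ
      exact h σ
  exact ⟨m, hm, congrArg (algebraMap ℚ⟮z⟯ ℂ) hzm⟩

end Kronecker

section Trace

open Module Polynomial

theorem isIntegral_of_hasEigenvalue {R K V : Type*} [CommRing R] [Field K] [Algebra R K]
    [AddCommGroup V] [Module K V] [Algebra R (End K V)] [IsScalarTower R K (End K V)]
    {f : End K V} (hf : IsIntegral R f) {μ : K} (hμ : f.HasEigenvalue μ) : IsIntegral R μ := by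
  obtain ⟨q, hq_monic, hq⟩ := hf
  obtain ⟨v, hv⟩ := hμ.exists_hasEigenvector
  refine ⟨q, hq_monic, ?_⟩
  have hqf : aeval f (q.map (algebraMap R K)) = 0 := by rwa [aeval_map_algebraMap, aeval_def]
  have hv_smul := End.aeval_apply_of_hasEigenvector (p := q.map (algebraMap R K)) hv
  rw [hqf, LinearMap.zero_apply, eq_comm, smul_eq_zero, or_iff_left hv.2,
    eval_map_algebraMap] at hv_smul
  exact hv_smul

theorem pow_eq_one_of_hasEigenvalue {K V : Type*} [Field K] [AddCommGroup V] [Module K V]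
    {f : End K V} {n : ℕ} (hf : f ^ n = 1) {μ : K} (hμ : f.HasEigenvalue μ) : μ ^ n = 1 := by
  obtain ⟨v, hv⟩ := hμ.exists_hasEigenvector
  have hv_pow := hv.pow_apply n
  rw [hf, End.one_apply] at hv_pow
  exact smul_left_injective K hv.2 (hv_pow.symm.trans (one_smul K v).symm)

variable {K V : Type*} [Field K] [IsAlgClosed K] [AddCommGroup V] [Module K V]
  [FiniteDimensional K V]

theorem isIntegral_trace {R : Type*} [CommRing R] [Algebra R K] [Algebra R (End K V)]
    [IsScalarTower R K (End K V)] {f : End K V} (hf : IsIntegral R f) :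
    IsIntegral R (LinearMap.trace K V f) := by
  rw [End.trace_eq_sum_roots_charpoly_of_splits (IsAlgClosed.splits _)]
  refine IsIntegral.multiset_sum fun μ hμ ↦ isIntegral_of_hasEigenvalue hf ?_
  rw [End.hasEigenvalue_iff_isRoot_charpoly]
  exact isRoot_of_mem_roots hμ

open scoped Classical in
theorem trace_aeval_eq_sum_finrank_eigenspace {f : End K V} (hf : f.IsSemisimple) (p : K[X]) :
    LinearMap.trace K V (aeval f p) =
      ∑ μ ∈ f.charpoly.roots.toFinset, finrank K (f.eigenspace μ) * p.eval μ := by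
  have hinternal : DirectSum.IsInternal f.eigenspace :=
    DirectSum.isInternal_submodule_of_iSupIndep_of_iSup_eq_top f.eigenspaces_iSupIndep
      hf.iSup_eigenspace_eq_top
  have hfin := WellFoundedGT.finite_ne_bot_of_iSupIndep f.eigenspaces_iSupIndep
  have hsmul (μ : K) (v : f.eigenspace μ) : aeval f p v = p.eval μ • (v : V) :=
    End.aeval_apply_of_mem_apply_eq_smul (End.mem_eigenspace_iff.1 v.2)
  have hmaps (μ : K) : Set.MapsTo (aeval f p) (f.eigenspace μ) (f.eigenspace μ) := fun v hv ↦
    hsmul μ ⟨v, hv⟩ ▸ Submodule.smul_mem _ _ hv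
  have hrestrict (μ : K) : (aeval f p).restrict (hmaps μ) = p.eval μ • LinearMap.id :=
    LinearMap.ext fun v ↦ Subtype.ext (hsmul μ v)
  rw [LinearMap.trace_eq_sum_trace_restrict' hinternal hfin hmaps]
  refine Finset.sum_congr ?_ fun μ _ ↦ by simp [hrestrict, mul_comm]
  ext μ
  rw [Set.Finite.mem_toFinset, Set.mem_ofPred_eq, ← End.hasEigenvalue_iff,
    End.hasEigenvalue_iff_isRoot_charpoly, Multiset.mem_toFinset,
    mem_roots f.charpoly_monic.ne_zero]

open scoped ComplexConjugate

theorem pow_pred_eq_conj_of_pow_eq_one {z : ℂ} {n : ℕ} (hn : n ≠ 0) (hz : z ^ n = 1) :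
    z ^ (n - 1) = conj z := by
  rw [← Complex.inv_eq_conj (Complex.norm_eq_one_of_pow_eq_one hz hn)]
  exact eq_inv_of_mul_eq_one_left (by rw [pow_sub_one_mul hn, hz])

theorem map_trace_pow_pred (σ : K →+* ℂ) {f : End K V} {n : ℕ} (hn : n ≠ 0) (hf : f ^ n = 1) :
    σ (LinearMap.trace K V (f ^ (n - 1))) = conj (σ (LinearMap.trace K V f)) := by
  classical
  have : CharZero K := σ.charZero
  have hss : f.IsSemisimple := End.isSemisimple_of_squarefree_aeval_eq_zero
    (separable_X_pow_sub_C (1 : K) (Nat.cast_ne_zero.2 hn) one_ne_zero).squarefree (by simp [hf])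
  have htrace := trace_aeval_eq_sum_finrank_eigenspace hss X
  have htrace_pow := trace_aeval_eq_sum_finrank_eigenspace hss (X ^ (n - 1))
  simp only [map_pow, aeval_X, eval_pow, eval_X] at htrace htrace_pow
  rw [htrace, htrace_pow]
  simp only [map_sum, map_mul, map_natCast, map_pow]
  refine Finset.sum_congr rfl fun μ hμ ↦ ?_
  have hμ_root : f.HasEigenvalue μ :=
    (f.hasEigenvalue_iff_isRoot_charpoly μ).2 (isRoot_of_mem_roots (Multiset.mem_toFinset.1 hμ))
  rw [pow_pred_eq_conj_of_pow_eq_one hn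
    (by rw [← map_pow, pow_eq_one_of_hasEigenvalue hf hμ_root, map_one])]

variable {G : Type*} [Group G] [Finite G] (ρ : Representation K G V)

theorem map_character_inv (σ : K →+* ℂ) (g : G) :
    σ (ρ.character g⁻¹) = conj (σ (ρ.character g)) := by
  have hpow : ρ g ^ orderOf g = 1 := by rw [← map_pow, pow_orderOf_eq_one, map_one]
  have hinv : ρ g⁻¹ = ρ g ^ (orderOf g - 1) := by
    rw [← map_pow, inv_eq_of_mul_eq_one_left
      ((pow_sub_one_mul (orderOf_pos g).ne' g).trans (pow_orderOf_eq_one g))]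
  rw [Representation.character, hinv]
  exact map_trace_pow_pred σ (orderOf_pos g).ne' hpow

theorem isIntegral_character (g : G) : IsIntegral ℤ (ρ.character g) := by
  refine isIntegral_trace (R := ℤ) (IsIntegral.of_pow (orderOf_pos g) ?_)
  rw [← map_pow, pow_orderOf_eq_one, map_one]
  exact isIntegral_one

theorem map_character_linHom (σ : K →+* ℂ) (g : G) :
    σ ((ρ.linHom ρ).character g) = (‖σ (ρ.character g)‖ : ℂ) ^ 2 := by
  rw [Representation.char_linHom, map_mul, map_character_inv, Complex.conj_mul']

end Trace

section Fourier

open Finset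
open scoped BigOperators ComplexConjugate

attribute [local instance] Fintype.ofFinite

section Field

variable {K H : Type*} [Field K] [CharZero K] [Group H] [Finite H]

/-- The Fourier coefficient at a linear character `ψ` of a function on a finite group, normalized
so that `ψ` itself has coefficient `1`. -/
noncomputable def groupFourierCoeff (F : H → K) (ψ : H →* Kˣ) : K :=
  𝔼 h, ((ψ h)⁻¹ : Kˣ) * F h

theorem groupFourierCoeff_eq_zero {F : H → K} {ψ : H →* Kˣ} {a b : H}
    (hF : ∀ h, F (a * h * b⁻¹) = F h) (hψ : ψ a ≠ ψ b) : groupFourierCoeff F ψ = 0 := by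
  have hinv : ((ψ a)⁻¹ * ψ b : Kˣ) * groupFourierCoeff F ψ = groupFourierCoeff F ψ := by
    simp only [groupFourierCoeff, mul_expect]
    refine Fintype.expect_equiv ((Equiv.mulLeft a).trans (Equiv.mulRight b⁻¹)) _ _ fun h ↦ ?_
    simp only [Equiv.trans_apply, Equiv.coe_mulLeft, Equiv.coe_mulRight, hF, ← mul_assoc,
      ← Units.val_mul, map_mul, map_inv, mul_inv, inv_inv]
    rw [mul_right_comm]
  by_contra hne
  rw [mul_eq_right₀ hne, Units.val_eq_one, inv_mul_eq_one] at hinv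
  exact hψ hinv

theorem map_groupFourierCoeff {L : Type*} [Field L] [CharZero L] (σ : K →+* L) (F : H → K)
    (ψ : H →* Kˣ) :
    σ (groupFourierCoeff F ψ) = groupFourierCoeff (σ ∘ F) ((Units.map (σ : K →* L)).comp ψ) := by
  simp [groupFourierCoeff, Fintype.expect_eq_sum_div_card]

variable [IsAlgClosed K]

theorem exists_monoidHom_units_apply_ne_one {h : H} (hh : h ∉ commutator H) :
    ∃ ψ : H →* Kˣ, ψ h ≠ 1 := by
  obtain ⟨φ, hφ⟩ := CommGroup.exists_apply_ne_one_of_hasEnoughRootsOfUnity (Abelianization H) K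
    (a := Abelianization.of h) (by rwa [Ne, ← MonoidHom.mem_ker, Abelianization.ker_of])
  exact ⟨φ.comp Abelianization.of, hφ⟩

theorem card_monoidHom_units : Nat.card (H →* Kˣ) = (commutator H).index :=
  (Nat.card_congr Abelianization.lift).trans
    (CommGroup.card_monoidHom_of_hasEnoughRootsOfUnity (Abelianization H) K)

open scoped Classical in
theorem sum_monoidHom_units_apply (h : H) :
    ∑ ψ : H →* Kˣ, (ψ h : K) = if h ∈ commutator H then ((commutator H).index : K) else 0 := by
  have hsum := sum_hom_units ((Units.coeHom K).comp (MonoidHom.eval h : (H →* Kˣ) →* Kˣ))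
  have hker : (Units.coeHom K).comp (MonoidHom.eval h : (H →* Kˣ) →* Kˣ) = 1 ↔
      h ∈ commutator H := by
    refine ⟨fun heval ↦ ?_, fun hh ↦ ?_⟩
    · by_contra hh
      obtain ⟨ψ, hψ⟩ := exists_monoidHom_units_apply_ne_one (K := K) hh
      exact hψ (Units.ext (DFunLike.congr_fun heval ψ))
    · ext ψ
      exact congrArg Units.val (Abelianization.commutator_subset_ker ψ hh)
  simpa [hker, ← card_monoidHom_units (K := K), Nat.card_eq_fintype_card] using hsum

theorem sum_groupFourierCoeff_mul_apply (F : H → K) (a : H) :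
    ∑ ψ : H →* Kˣ, groupFourierCoeff F ψ * ψ a = 𝔼 n : commutator H, F (a * n) := by
  calc ∑ ψ : H →* Kˣ, groupFourierCoeff F ψ * ψ a
      = 𝔼 h, (∑ ψ : H →* Kˣ, (ψ (h⁻¹ * a) : K)) * F h := by
        simp only [groupFourierCoeff, expect_mul, ← expect_sum_comm, sum_mul]
        refine expect_congr rfl fun h _ ↦ sum_congr rfl fun ψ _ ↦ ?_
        rw [map_mul, map_inv, Units.val_mul, mul_right_comm]
    _ = 𝔼 h, (∑ ψ : H →* Kˣ, (ψ h⁻¹ : K)) * F (a * h) :=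
        Fintype.expect_equiv (Equiv.mulLeft a⁻¹) _ _ fun h ↦ by simp
    _ = 𝔼 n : commutator H, F (a * n) := by
        have hcard : (Nat.card H : K) = Nat.card (commutator H) * (commutator H).index := by
          rw [← Nat.cast_mul, Subgroup.card_mul_index]
        have hindex : ((commutator H).index : K) ≠ 0 :=
          Nat.cast_ne_zero.2 Subgroup.index_ne_zero_of_finite
        simp only [sum_monoidHom_units_apply, inv_mem_iff, ite_mul, zero_mul,
          Fintype.expect_eq_sum_div_card, ← Nat.card_eq_fintype_card, hcard, ← sum_filter,
          ← mul_sum]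
        rw [mul_comm (Nat.card (commutator H) : K), mul_div_mul_left _ _ hindex,
          Finset.sum_subtype _ (p := (· ∈ commutator H)) (by simp)]

end Field

section Complex

open scoped ComplexOrder

theorem eq_one_of_expect_mul_eq_expect {ι : Type*} [Fintype ι] {F u : ι → ℂ} (hF : 0 ≤ F)
    (hu : ∀ i, ‖u i‖ ≤ 1) (h : 𝔼 i, u i * F i = 𝔼 i, F i) {i : ι} (hi : F i ≠ 0) : u i = 1 := by
  have hre (j) : ((1 - u j) * F j).re = (1 - (u j).re) * (F j).re := by
    simp [(Complex.nonneg_iff.1 (hF j)).2.symm]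
  have hnonneg (j) : 0 ≤ ((1 - u j) * F j).re := by
    rw [hre]
    exact mul_nonneg (sub_nonneg.2 ((Complex.re_le_norm _).trans (hu j)))
      (Complex.nonneg_iff.1 (hF j)).1
  have hexpect : 𝔼 j, ((1 - u j) * F j).re = 0 := by
    simp only [← Complex.re_expect, sub_mul, one_mul, expect_sub_distrib, h, sub_self,
      Complex.zero_re]
  have hzero := (expect_eq_zero_iff_of_nonneg fun j _ ↦ hnonneg j).1 hexpect i (mem_univ i)
  have hFi : (F i).re ≠ 0 := fun h0 ↦ hi (Complex.ext h0 (Complex.nonneg_iff.1 (hF i)).2.symm)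
  have hui : (u i).re = 1 := by
    rw [hre, mul_eq_zero, or_iff_left hFi, sub_eq_zero] at hzero
    exact hzero.symm
  have hnorm : ‖u i‖ = 1 := (hu i).antisymm (hui ▸ Complex.re_le_norm _)
  rw [Complex.eq_coe_norm_of_nonneg (Complex.re_eq_norm.1 (hui.trans hnorm.symm)), hnorm,
    Complex.ofReal_one]

variable {H : Type*} [Group H] [Finite H] {F : H → ℂ}

theorem norm_monoidHom_units_apply (ψ : H →* ℂˣ) (h : H) : ‖(ψ h : ℂ)‖ = 1 := by
  refine Complex.norm_eq_one_of_pow_eq_one ?_ (orderOf_pos h).ne'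
  rw [← Units.val_pow_eq_pow_val, ← map_pow, pow_orderOf_eq_one, map_one, Units.val_one]

theorem norm_groupFourierCoeff_le_one (hF : 0 ≤ F) (hF_one : 𝔼 h, F h = 1) (ψ : H →* ℂˣ) :
    ‖groupFourierCoeff F ψ‖ ≤ 1 := by
  have hnorm_expect : 𝔼 h, ‖F h‖ = 1 := by
    rw [← Complex.ofReal_inj, Complex.ofReal_expect]
    simpa only [← Complex.eq_coe_norm_of_nonneg (hF _), Complex.ofReal_one] using hF_one
  refine (RCLike.norm_expect_le (K := ℂ)).trans_eq ?_
  simpa only [norm_mul, ← map_inv, norm_monoidHom_units_apply, one_mul] using hnorm_expect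

theorem groupFourierCoeff_mul_apply_eq_one (hF : 0 ≤ F) (hF_one : 𝔼 h, F h = 1) {ψ : H →* ℂˣ}
    (hψ : ‖groupFourierCoeff F ψ‖ = 1) {a : H} (ha : F a ≠ 0) :
    groupFourierCoeff F ψ * ψ a = 1 := by
  set c := groupFourierCoeff F ψ
  have hc_mul : conj c * c = 1 := by rw [Complex.conj_mul', hψ]; simp
  have hu : conj c * ((ψ a)⁻¹ : ℂˣ) = 1 := by
    refine eq_one_of_expect_mul_eq_expect (u := fun h ↦ conj c * ((ψ h)⁻¹ : ℂˣ)) hF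
      (fun h ↦ ?_) ?_ ha
    · rw [norm_mul, Complex.norm_conj, hψ, ← map_inv, norm_monoidHom_units_apply, one_mul]
    · simp only [mul_assoc, ← mul_expect]
      exact hc_mul.trans hF_one.symm
  rw [Units.mul_inv_eq_one] at hu
  rw [← hu, mul_comm, hc_mul]

theorem exists_expect_commutator_eq_natCast (hF : 0 ≤ F) (hF_one : 𝔼 h, F h = 1)
    (hψ : ∀ ψ : H →* ℂˣ, groupFourierCoeff F ψ ≠ 0 → ‖groupFourierCoeff F ψ‖ = 1) (a : H) :
    ∃ k : ℕ, 𝔼 n : commutator H, F (a * n) = k := by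
  classical
  by_cases! hzero : ∀ n : commutator H, F (a * n) = 0
  · exact ⟨0, by simp [hzero]⟩
  obtain ⟨n, hn⟩ := hzero
  have hterm (ψ : H →* ℂˣ) :
      groupFourierCoeff F ψ * ψ a = if groupFourierCoeff F ψ ≠ 0 then 1 else 0 := by
    split_ifs with h0
    · have hψn : ψ n = 1 := Abelianization.commutator_subset_ker ψ n.2
      rw [← groupFourierCoeff_mul_apply_eq_one hF hF_one (hψ ψ h0) hn, map_mul, hψn, mul_one]
    · rw [not_not.1 h0, zero_mul]
  rw [← sum_groupFourierCoeff_mul_apply]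
  exact ⟨_, by rw [Fintype.sum_congr _ _ hterm, sum_boole]⟩

end Complex

end Fourier

section Twist

open scoped BigOperators

attribute [local instance] Fintype.ofFinite

variable {K G W : Type*} [Field K] [Group G] [AddCommGroup W] [Module K W]

/-- The twist of a representation by a linear character, that is, its tensor product with the
corresponding one-dimensional representation. -/
def twist (ρ : Representation K G W) (ψ : G →* Kˣ) : Representation K G W where
  toFun g := (ψ g : K) • ρ g
  map_one' := by simp
  map_mul' g h := by simp [smul_smul, mul_comm]

theorem twist_apply (ρ : Representation K G W) (ψ : G →* Kˣ) (g : G) :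
    twist ρ ψ g = (ψ g : K) • ρ g := rfl

theorem averageMap_eq_smul_sum [Fintype G] [Invertible (Fintype.card G : K)]
    (ρ : Representation K G W) : ρ.averageMap = ⅟(Fintype.card G : K) • ∑ g, ρ g := by
  simp [Representation.averageMap, GroupAlgebra.average]

variable [Finite G] (ρ : Representation K G W) {N : Subgroup G} {ψ : N →* Kˣ}

section Invertible

variable [Invertible (Fintype.card N : K)]

theorem trace_mul_averageMap_twist [CharZero K] (y : G) :
    LinearMap.trace K W (ρ y * (twist (ρ.comp N.subtype) ψ⁻¹).averageMap) =
      groupFourierCoeff (fun m : N ↦ ρ.character (y * m)) ψ := by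
  simp only [averageMap_eq_smul_sum, twist_apply, mul_smul_comm, Finset.mul_sum, map_smul, map_sum,
    groupFourierCoeff, Fintype.expect_eq_sum_div_card, smul_eq_mul, invOf_eq_inv, div_eq_inv_mul,
    Representation.character, map_mul, MonoidHom.inv_apply, MonoidHom.comp_apply,
    Subgroup.coe_subtype]

theorem commute_averageMap_twist [N.Normal] {y : G} (hψ : ∀ m, ψ (MulAut.conjNormal y m) = ψ m) :
    Commute (ρ y) (twist (ρ.comp N.subtype) ψ⁻¹).averageMap := by
  rw [averageMap_eq_smul_sum]
  refine Commute.smul_right ?_ _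
  rw [Commute, SemiconjBy, Finset.mul_sum, Finset.sum_mul]
  refine Fintype.sum_equiv (MulAut.conjNormal y).toEquiv _ _ fun m ↦ ?_
  simp [twist_apply, hψ, ← map_mul]

end Invertible

theorem isIntegral_groupFourierCoeff_character [CharZero K] [IsAlgClosed K]
    [FiniteDimensional K W] [N.Normal] (y : G) :
    IsIntegral ℤ (groupFourierCoeff (fun m : N ↦ ρ.character (y * m)) ψ) := by
  by_cases! hψ : ∀ m, ψ (MulAut.conjNormal y m) = ψ m
  · have : Invertible (Fintype.card N : K) :=
      invertibleOfNonzero (Nat.cast_ne_zero.2 Fintype.card_ne_zero)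
    rw [← trace_mul_averageMap_twist]
    set P := (twist (ρ.comp N.subtype) ψ⁻¹).averageMap
    have hpow : (ρ y * P) ^ (orderOf y + 1) = ρ y * P := by
      rw [(commute_averageMap_twist ρ hψ).mul_pow, ← map_pow, pow_succ, pow_orderOf_eq_one, one_mul,
        IsIdempotentElem.pow_succ_eq _ (Representation.isProj_averageMap _).isIdempotentElem]
    refine isIntegral_trace (R := ℤ) ⟨.X ^ (orderOf y + 1) - .X, ?_, by simp [hpow]⟩
    exact Polynomial.monic_X_pow_sub (by simpa using mod_cast Nat.succ_lt_succ (orderOf_pos y))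
  · obtain ⟨m, hm⟩ := hψ
    have hzero : groupFourierCoeff (fun m : N ↦ ρ.character (y * m)) ψ = 0 := by
      refine groupFourierCoeff_eq_zero (fun h ↦ ?_) hm.symm
      rw [← ρ.char_conj (y * h) (y * m * y⁻¹)]
      simp [mul_assoc]
    exact hzero ▸ isIntegral_zero

end Twist

section Averages

open Finset
open scoped BigOperators ComplexOrder

attribute [local instance] Fintype.ofFinite

theorem expect_expect_mul_of_le {G E : Type*} [Group G] [Finite G] [AddCommMonoid E] [Module ℚ≥0 E]
    {M N : Subgroup G} (hMN : M ≤ N) (f : G → E) :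
    𝔼 a : N, 𝔼 m : M, f (a * m) = 𝔼 a : N, f a := by
  rw [expect_comm]
  refine Eq.trans (expect_congr rfl fun m _ ↦ ?_) (Fintype.expect_const (ι := M) _)
  exact Fintype.expect_equiv (Equiv.mulRight ⟨m, hMN m.2⟩) _ _ fun a ↦ rfl

theorem half_le_expect_of_expect_natCast_eq_one {ι : Type*} [Fintype ι] [Nonempty ι] {k : ι → ℕ}
    {p : ι → ℝ} (hk : 𝔼 i, (k i : ℝ) = 1) (hp : ∀ i, 0 ≤ p i) (hp_one : ∀ i, k i = 0 → p i = 1)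
    (hp_half : ∀ i, k i = 1 → 1 / 2 ≤ p i) : 1 / 2 ≤ 𝔼 i, p i := by
  have hle (i) : 1 - (k i : ℝ) / 2 ≤ p i := by
    obtain h | h | h : k i = 0 ∨ k i = 1 ∨ 2 ≤ k i := by lia
    · simp [h, hp_one i h]
    · rw [h]
      linarith [hp_half i h]
    · have h2 : (2 : ℝ) ≤ k i := mod_cast h
      linarith [hp i]
  calc (1 / 2 : ℝ) = 𝔼 i, (1 - (k i : ℝ) / 2) := by
        rw [expect_sub_distrib, Fintype.expect_const, ← expect_div, hk]
        norm_num
    _ ≤ 𝔼 i, p i := expect_le_expect fun i _ ↦ hle i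

variable {G V : Type*} [Group G] [Finite G] [AddCommGroup V] [Module ℂ V] [FiniteDimensional ℂ V]
  {ρ : Representation ℂ G V} {N : Subgroup G} [N.Normal]

theorem norm_groupFourierCoeff_character_eq_one
    (hρ : ∀ (σ : ℂ →+* ℂ) (g : G), 0 ≤ σ (ρ.character g)) {y : G}
    (hy : 𝔼 m : N, ρ.character (y * m) = 1) {ψ : N →* ℂˣ}
    (hψ : groupFourierCoeff (fun m : N ↦ ρ.character (y * m)) ψ ≠ 0) :
    ‖groupFourierCoeff (fun m : N ↦ ρ.character (y * m)) ψ‖ = 1 := by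
  obtain ⟨m, hm, hpow⟩ := exists_pow_eq_one_of_forall_norm_map_le_one
    (isIntegral_groupFourierCoeff_character ρ y) hψ fun σ ↦ by
      rw [map_groupFourierCoeff]
      refine norm_groupFourierCoeff_le_one (fun m ↦ hρ σ _) ?_ _
      simpa [Fintype.expect_eq_sum_div_card] using congrArg σ hy
  exact Complex.norm_eq_one_of_pow_eq_one hpow hm.ne'

theorem exists_expect_commutator_character_eq_natCast
    (hρ : ∀ (σ : ℂ →+* ℂ) (g : G), 0 ≤ σ (ρ.character g)) {y : G}
    (hy : 𝔼 m : N, ρ.character (y * m) = 1) (a : N) :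
    ∃ k : ℕ, 𝔼 m : (⁅N, N⁆ : Subgroup G), ρ.character (y * a * m) = k := by
  obtain ⟨k, hk⟩ := exists_expect_commutator_eq_natCast
    (F := fun m : N ↦ ρ.character (y * m)) (fun m ↦ hρ (.id ℂ) _) hy
    (fun ψ ↦ norm_groupFourierCoeff_character_eq_one hρ hy) a
  let e : commutator N ≃* (⁅N, N⁆ : Subgroup G) :=
    ((commutator N).equivMapOfInjective _ N.subtype_injective).trans
      (MulEquiv.subgroupCongr N.map_subtype_commutator)
  refine ⟨k, hk ▸ (Fintype.expect_equiv e.toEquiv _ _ fun m ↦ ?_).symm⟩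
  rw [Subgroup.coe_mul, ← mul_assoc]
  rfl

end Averages

section ZeroOrRootsOfUnity

open Finset
open scoped BigOperators ComplexOrder

attribute [local instance] Fintype.ofFinite

/-- The complex numbers which are zero or a root of unity. -/
def zeroOrRootsOfUnity : Set ℂ := {z | z = 0 ∨ ∃ m : ℕ, 0 < m ∧ z ^ m = 1}

variable {G V : Type*} [Group G] [Finite G] [AddCommGroup V] [Module ℂ V] [FiniteDimensional ℂ V]
  {ρ : Representation ℂ G V}

theorem character_mem_zeroOrRootsOfUnity {g : G}
    (hg : (ρ.linHom ρ).character g = 0 ∨ (ρ.linHom ρ).character g = 1) :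
    ρ.character g ∈ zeroOrRootsOfUnity := by
  have hnorm (σ : ℂ →+* ℂ) := map_character_linHom ρ σ g
  by_cases h : ρ.character g = 0
  · exact .inl h
  have hone : (ρ.linHom ρ).character g = 1 := by
    refine hg.resolve_left fun h0 ↦ h ?_
    simpa [h0] using (hnorm (.id ℂ)).symm
  refine .inr (exists_pow_eq_one_of_forall_norm_map_le_one (isIntegral_character ρ g) h fun σ ↦ ?_)
  have hσ : ‖σ (ρ.character g)‖ ^ 2 = 1 := by
    rw [← Complex.ofReal_inj, Complex.ofReal_pow, ← hnorm, hone, map_one, Complex.ofReal_one]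
  exact (sq_le_one_iff₀ (norm_nonneg _)).1 hσ.le

theorem half_le_expect_indicator_zeroOrRootsOfUnity [Group.IsSolvable G] (N : Subgroup G)
    [hN : N.Normal] (y : G) (hy : 𝔼 m : N, (ρ.linHom ρ).character (y * m) = 1) :
    1 / 2 ≤ 𝔼 m : N, zeroOrRootsOfUnity.indicator (1 : ℂ → ℝ) (ρ.character (y * m)) := by
  have hnonneg (σ : ℂ →+* ℂ) (g : G) : 0 ≤ σ ((ρ.linHom ρ).character g) := by
    rw [map_character_linHom]
    positivity
  induction N using WellFoundedLT.induction generalizing y hN with | ind N ih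
  obtain rfl | hN_ne := eq_or_ne N ⊥
  · have hbot (m : (⊥ : Subgroup G)) : y * m = y := by rw [Subgroup.mem_bot.1 m.2, mul_one]
    simp only [hbot, Fintype.expect_const] at hy ⊢
    rw [Set.indicator_of_mem (character_mem_zeroOrRootsOfUnity (.inr hy)), Pi.one_apply]
    norm_num
  have hlt : ⁅N, N⁆ < N := Group.IsSolvable.commutator_lt_of_ne_bot hN_ne
  choose k hk using exists_expect_commutator_character_eq_natCast hnonneg hy
  rw [← expect_expect_mul_of_le hlt.le fun g ↦
    zeroOrRootsOfUnity.indicator (1 : ℂ → ℝ) (ρ.character (y * g))]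
  simp only [← mul_assoc]
  refine half_le_expect_of_expect_natCast_eq_one (k := k) ?_ (fun a ↦ ?_) (fun a ha ↦ ?_)
    fun a ha ↦ ?_
  · rw [← Complex.ofReal_inj, Complex.ofReal_expect, Complex.ofReal_one, ← hy,
      ← expect_expect_mul_of_le hlt.le fun g ↦ (ρ.linHom ρ).character (y * g)]
    simp [← hk, mul_assoc]
  · exact expect_nonneg fun m _ ↦ Set.indicator_nonneg (fun _ _ ↦ zero_le_one) _
  · have hzero (m : (⁅N, N⁆ : Subgroup G)) : (ρ.linHom ρ).character (y * a * m) = 0 :=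
      (expect_eq_zero_iff_of_nonneg fun m _ ↦ hnonneg (.id ℂ) _).1
        ((hk a).trans (by simp [ha])) m (mem_univ m)
    simp [character_mem_zeroOrRootsOfUnity (.inl (hzero _))]
  · exact ih _ hlt (y * a) ((hk a).trans (by simp [ha]))

theorem card_le_two_mul_ncard_character_mem_zeroOrRootsOfUnity [Group.IsSolvable G]
    (hρ : 𝔼 g, (ρ.linHom ρ).character g = 1) :
    Nat.card G ≤ 2 * {g | ρ.character g ∈ zeroOrRootsOfUnity}.ncard := by
  have htop {E : Type} [AddCommMonoid E] [Module ℚ≥0 E] (f : G → E) :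
      𝔼 m : (⊤ : Subgroup G), f (1 * m) = 𝔼 g, f g :=
    Fintype.expect_equiv Subgroup.topEquiv.toEquiv _ _ fun m ↦ by simp
  have hhalf := half_le_expect_indicator_zeroOrRootsOfUnity (ρ := ρ) ⊤ 1 ((htop _).trans hρ)
  rw [htop fun g ↦ zeroOrRootsOfUnity.indicator (1 : ℂ → ℝ) (ρ.character g),
    Fintype.expect_eq_sum_div_card, le_div_iff₀ (mod_cast Fintype.card_pos)] at hhalf
  classical
  simp only [Set.indicator_apply, Pi.one_apply, sum_boole] at hhalf
  rw [Set.ncard_eq_toFinset_card', Set.toFinset_ofPred, Nat.card_eq_fintype_card]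
  have hcast : (Fintype.card G : ℝ) ≤ 2 * #{g | ρ.character g ∈ zeroOrRootsOfUnity} := by linarith
  exact_mod_cast hcast

end ZeroOrRootsOfUnity

section SylowTower

theorem HasSylowTower.isSolvable {G : Type*} [Group G] [Fintype G] (h : HasSylowTower G) :
    Group.IsSolvable G := by
  obtain ⟨k, p, N, hp, -, hmono, hbot, htop, hnormal, hindex⟩ := h
  have hN (i : Fin (k + 1)) : Group.IsSolvable (N i) := by
    induction i using Fin.induction with
    | zero => rw [hbot]; infer_instance
    | succ i ih =>
      have := hnormal i.castSucc
      have : Fact (p i).Prime := ⟨hp i⟩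
      let M := (N i.castSucc).subgroupOf (N i.succ)
      have : Group.IsNilpotent (N i.succ ⧸ M) := (IsPGroup.of_card (hindex i)).isNilpotent
      refine Group.isSolvable_of_ker_le_range (Subgroup.inclusion (hmono i.castSucc_le_succ))
        (QuotientGroup.mk' M) fun x hx ↦ ?_
      rw [QuotientGroup.ker_mk'] at hx
      exact ⟨⟨x, hx⟩, rfl⟩
  have hG : Group.IsSolvable (⊤ : Subgroup G) := htop ▸ hN (Fin.last k)
  exact Group.isSolvable_of_surjective (f := (⊤ : Subgroup G).subtype) fun x ↦ ⟨⟨x, trivial⟩, rfl⟩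

end SylowTower

section Irreducible

open scoped BigOperators

attribute [local instance] Fintype.ofFinite

theorem expect_character_linHom_self_eq_one {K G : Type*} [Field K] [IsAlgClosed K] [CharZero K]
    [Group G] [Finite G] (V : FDRep K G) [Simple V] :
    𝔼 g, (Representation.linHom V.ρ V.ρ).character g = 1 := by
  have : Invertible (Nat.card G : K) := invertibleOfNonzero (Nat.cast_ne_zero.2 Nat.card_pos.ne')
  have horth := FDRep.char_orthonormal V V
  rw [if_pos ⟨Iso.refl V⟩, Nat.card_eq_fintype_card, ← div_eq_inv_mul] at horth
  simp only [Representation.char_linHom, mul_comm (Representation.character _ _⁻¹)]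
  rw [Fintype.expect_eq_sum_div_card]
  exact horth

end Irreducible

theorem stmt11_general {G : Type*} [Group G] [Finite G] [Group.IsSolvable G] (V : FDRep ℂ G)
    [Simple V] :
    Nat.card G ≤
      2 * {x : G | V.character x = 0 ∨ ∃ m : ℕ, 0 < m ∧ V.character x ^ m = 1}.ncard :=
  card_le_two_mul_ncard_character_mem_zeroOrRootsOfUnity (expect_character_linHom_self_eq_one V)

/-- If a finite group `G` has a Sylow tower and `χ` is an irreducible
complex character of `G`, then `χ(x)` is zero or a root of unity for at least `|G|/2`
elements `x ∈ G`. -/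
theorem stmt11 {G : Type} [Group G] [Fintype G]
    (htower : HasSylowTower G)
    (V : FDRep ℂ G) (hV : Simple V) :
    Fintype.card G ≤
      2 * {x : G | V.character x = 0 ∨ ∃ m : ℕ, 0 < m ∧ V.character x ^ m = 1}.ncard :=
  have := htower.isSolvable
  Nat.card_eq_fintype_card (α := G) ▸ stmt11_general V
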